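/- Let n ≥ 2 be an integer and define D₁(n,y) and N₁(n,y) as in the context. Then for every y ∈ ℝ with N₁(n,y) > 0, the largest real root q of the Eulerian polynomial A_n(x) = Σ_{σ ∈ S_{n+1}} x^{des(σ)} satisfies q ≥ −D₁(n,y)/N₁(n,y). -/

import Mathlib

/-!
The argument works with the generating function `∑ (k+1)^(n+1) x^k = A_n(x) / (1-x)^(n+2)`
(`hasSum_eulerian`). It follows from Worpitzky's identity (`worpitzky`), which counts the words of
length `n+1` over `k+1` letters according to the permutation that sorts them stably.

At `x = -1/e` with `e > 0` the series alternates, and cutting it after an even index past which the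
terms decrease gives an upper bound. So `A_n(-1/e) ≤ 0` as soon as such a truncation is nonpositive
(`eulerian_eval_nonpos`). As `A_n(0) ≥ 0`, there is then a root in `[-1/e, 0]`, whence `q ≥ -1/e`.
It remains to choose `e` so that also `N₁(n,y) ≤ e D₁(n,y)` for all `y`. The difference
`e D₁ - N₁` is a quadratic in `y`, and it suffices that its leading coefficient is positive and
its discriminant nonpositive (`bound_of_test_point`).

Write `u = 2^(n+1)` and `w = 3^(n+1)`. For `n ≥ 24`, `e` is the larger root of `e² - u e + w`
(`bound_large`). With `s = w / e = u - e`, the coefficients of the quadratic are then dominated by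
`(n-1) e`, `-2 s e` and `s² e`, so the discriminant is negative for large `n` (`disc_large`). For
`2 ≤ n ≤ 23` explicit rational values of `e` work (`bound_small`).
-/

/-- Number of descents of a permutation of `{0,…,n}` (positions `i` with `σ(i) > σ(i+1)`). -/
def des {n : ℕ} (σ : Equiv.Perm (Fin (n + 1))) : ℕ :=
  (Finset.univ.filter fun i : Fin n => σ i.succ < σ i.castSucc).card

/-- The `n`-th Eulerian polynomial `A_n(x) = Σ_{σ ∈ S_{n+1}} x^{des σ}`. -/
noncomputable def eulerianPoly (n : ℕ) : Polynomial ℝ :=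
  ∑ σ : Equiv.Perm (Fin (n + 1)), Polynomial.X ^ des σ

/-- The quantity `D₁(n,y)` coming from linearizing the diagonal restriction of the
spectrahedral relaxation of the multivariate Eulerian polynomial `A_n` with the vector
`v = (y, 1, −1, …, −1)`. -/
noncomputable def D1 (n : ℕ) (y : ℝ) : ℝ :=
  10 - (2:ℝ)^(n+2) + (2:ℝ)^(2*n+2) - 2*(3:ℝ)^(n+1) + (n:ℝ)
  + 4*y - (2:ℝ)^(n+1)*y + (n:ℝ)*y + y*(4 - (2:ℝ)^(n+1) + (n:ℝ) + (n:ℝ)*y)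

/-- The quantity `N₁(n,y)` coming from linearizing the diagonal restriction of the
spectrahedral relaxation of the multivariate Eulerian polynomial `A_n` with the vector
`v = (y, 1, −1, …, −1)`. -/
noncomputable def N1 (n : ℕ) (y : ℝ) : ℝ :=
  -10 + (2:ℝ)^(n+3) - (1/3)*(2:ℝ)^(2*n+3) - (1/3)*(2:ℝ)^(2*n+4)
  + (1/7)*(2:ℝ)^(3*n+4) + (1/7)*(2:ℝ)^(3*n+5)
  + 2*(3:ℝ)^n - 4*(3:ℝ)^(n+1) + 2*(3:ℝ)^(n+2)
  - (1/5)*(2:ℝ)^(n+1)*(3:ℝ)^(n+3)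
  - (4:ℝ)^(n+1) + (4:ℝ)^(n+2) - (1/5)*(6:ℝ)^(n+2) + (1/7)*(8:ℝ)^(n+1)
  - (n:ℝ)
  - 8*y - (2:ℝ)^(n+2)*y + (2:ℝ)^(n+3)*y - (1/3)*(2:ℝ)^(2*n+3)*y - (1/3)*(2:ℝ)^(2*n+4)*y
  + 4*(3:ℝ)^(n+1)*y - 2*(n:ℝ)*y - 2*y^2 + (2:ℝ)^(n+1)*y^2

/-! ### Worpitzky's identity and the generating function -/

/-- The number of ascents of `σ` at positions before `i`. -/
def ascBefore {n : ℕ} (σ : Equiv.Perm (Fin (n + 1))) (i : Fin (n + 1)) : ℕ :=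
  (Finset.univ.filter fun j : Fin n => j.castSucc < i ∧ ¬ σ j.succ < σ j.castSucc).card

lemma ascBefore_zero {n : ℕ} (σ : Equiv.Perm (Fin (n + 1))) : ascBefore σ 0 = 0 := by
  simp [ascBefore]

lemma ascBefore_succ {n : ℕ} (σ : Equiv.Perm (Fin (n + 1))) (i : Fin n) :
    ascBefore σ i.succ =
      ascBefore σ i.castSucc + if σ i.succ < σ i.castSucc then 0 else 1 := by
  unfold ascBefore
  split_ifs with h
  · rw [add_zero]
    congr 1
    ext j
    simp only [Finset.mem_filter, Finset.mem_univ, true_and, Fin.castSucc_lt_succ_iff,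
      Fin.castSucc_lt_castSucc_iff]
    refine ⟨fun ⟨h1, h2⟩ => ⟨lt_of_le_of_ne h1 ?_, h2⟩, fun ⟨h1, h2⟩ => ⟨h1.le, h2⟩⟩
    rintro rfl
    exact h2 h
  · have hni : i ∉ Finset.univ.filter
        fun j : Fin n => j.castSucc < i.castSucc ∧ ¬ σ j.succ < σ j.castSucc := by simp
    rw [← Finset.card_insert_of_notMem hni]
    congr 1
    ext j
    simp only [Finset.mem_filter, Finset.mem_univ, true_and, Fin.castSucc_lt_succ_iff,
      Fin.castSucc_lt_castSucc_iff, Finset.mem_insert]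
    constructor
    · rintro ⟨h1, h2⟩
      rcases h1.eq_or_lt with h1 | h1
      · exact Or.inl h1
      · exact Or.inr ⟨h1, h2⟩
    · rintro (rfl | ⟨h1, h2⟩)
      · exact ⟨le_rfl, h⟩
      · exact ⟨h1.le, h2⟩

lemma ascBefore_last_add_des {n : ℕ} (σ : Equiv.Perm (Fin (n + 1))) :
    ascBefore σ (Fin.last n) + des σ = n := by
  have h := Finset.card_filter_add_card_filter_not (s := (Finset.univ : Finset (Fin n)))
    (fun j : Fin n => σ j.succ < σ j.castSucc)
  rw [Finset.card_univ, Fintype.card_fin] at h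
  simp only [ascBefore, des, Fin.castSucc_lt_last, true_and]
  omega

/-- `σ` is the stable sorting permutation of the word `f` iff `f ∘ σ` weakly increases, strictly at
the descents of `σ`; adding `ascBefore σ` turns this into strict growth at every step. -/
lemma eq_sort_iff_step {n k : ℕ} (σ : Equiv.Perm (Fin (n + 1))) (f : Fin (n + 1) → Fin (k + 1)) :
    σ = Tuple.sort f ↔ ∀ i : Fin n,
      ((f (σ i.castSucc) : ℕ) + ascBefore σ i.castSucc < f (σ i.succ) + ascBefore σ i.succ) := by
  rw [Tuple.eq_sort_iff', Fin.strictMono_iff_lt_succ]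
  refine forall_congr' fun i => ?_
  rw [ascBefore_succ]
  have hne : σ i.castSucc ≠ σ i.succ := fun h => i.castSucc_lt_succ.ne (σ.injective h)
  change toLex (f (σ i.castSucc), σ i.castSucc) < toLex (f (σ i.succ), σ i.succ) ↔ _
  rw [Prod.Lex.toLex_lt_toLex]
  simp only [Fin.lt_def, Fin.ext_iff, ne_eq] at hne ⊢
  split_ifs with h <;> omega

/-- There are `C(N, m)` strictly increasing `m`-tuples in `Fin N`. -/
lemma card_orderEmb (m N : ℕ) : Fintype.card (Fin m ↪o Fin N) = N.choose m := by
  rw [← Nat.card_eq_fintype_card, Nat.card_congr Set.powersetCard.ofFinEmbEquiv,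
    Set.powersetCard.card, Nat.card_eq_fintype_card, Fintype.card_fin]

/-- Words sorted by `σ` correspond to strictly increasing `(n+1)`-tuples through
`f ↦ f ∘ σ + ascBefore σ`, whose values lie below `k + 1 + (n - des σ)`. -/
lemma card_sort_eq {n k : ℕ} (σ : Equiv.Perm (Fin (n + 1))) :
    (Finset.univ.filter fun f : Fin (n + 1) → Fin (k + 1) => Tuple.sort f = σ).card
      = (k + 1 + (n - des σ)).choose (n + 1) := by
  have hlast := ascBefore_last_add_des σ
  have hmono : Monotone (ascBefore σ) := by
    rw [Fin.monotone_iff_le_succ]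
    intro i
    rw [ascBefore_succ]
    omega
  have hbd : ∀ i, ascBefore σ i ≤ n - des σ := fun i =>
    (hmono (Fin.le_last i)).trans (by omega)
  rw [← card_orderEmb, ← Finset.card_univ]
  refine Finset.card_bij
    (fun f hf => OrderEmbedding.ofStrictMono
      (fun i => ⟨(f (σ i) : ℕ) + ascBefore σ i, by have := hbd i; omega⟩) ?_) ?_ ?_ ?_
  · rw [Fin.strictMono_iff_lt_succ]
    exact (eq_sort_iff_step σ f).1 (Finset.mem_filter.1 hf).2.symm
  · simp
  · intro f hf g hg hfg
    funext j
    have := congrArg (fun e : Fin (n + 1) ↪o Fin (k + 1 + (n - des σ)) => (e (σ.symm j) : ℕ)) hfg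
    simp only [OrderEmbedding.coe_ofStrictMono, Equiv.apply_symm_apply] at this
    ext
    omega
  · intro h _
    have hstep : ∀ i : Fin n, (h i.castSucc : ℕ) < h i.succ := fun i =>
      h.strictMono i.castSucc_lt_succ
    have hge : ∀ i, ascBefore σ i ≤ h i := by
      intro i
      induction i using Fin.induction with
      | zero => simp [ascBefore_zero]
      | succ i ih =>
        rw [ascBefore_succ]
        have := hstep i
        split_ifs <;> omega
    have hmono' : Monotone fun i => (h i : ℕ) - ascBefore σ i := by
      rw [Fin.monotone_iff_le_succ]
      intro i
      simp only [ascBefore_succ]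
      have := hstep i
      split_ifs <;> omega
    have hub : ∀ i, (h i : ℕ) - ascBefore σ i < k + 1 := by
      intro i
      have h1 : (h i : ℕ) - ascBefore σ i ≤ _ := hmono' (Fin.le_last i)
      have h2 := (h (Fin.last n)).isLt
      simp only at h1
      omega
    refine ⟨fun j => ⟨(h (σ.symm j) : ℕ) - ascBefore σ (σ.symm j), hub _⟩, ?_, ?_⟩
    · rw [Finset.mem_filter]
      refine ⟨Finset.mem_univ _, ((eq_sort_iff_step σ _).2 fun i => ?_).symm⟩
      simp only [Equiv.symm_apply_apply]
      have := hstep i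
      have := hge i.castSucc
      have := hge i.succ
      omega
    · ext i
      have := hge i
      simp only [OrderEmbedding.coe_ofStrictMono, Equiv.symm_apply_apply]
      omega

/-- Worpitzky's identity, obtained by sorting the `(k+1)^(n+1)` words of length `n+1`. -/
lemma worpitzky (n k : ℕ) :
    (k + 1) ^ (n + 1) =
      ∑ σ : Equiv.Perm (Fin (n + 1)), (k + 1 + (n - des σ)).choose (n + 1) := by
  have h := Finset.card_eq_sum_card_fiberwise
    (s := (Finset.univ : Finset (Fin (n + 1) → Fin (k + 1))))
    (t := (Finset.univ : Finset (Equiv.Perm (Fin (n + 1)))))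
    (f := fun f => Tuple.sort f) (by simp)
  simp only [card_sort_eq] at h
  rw [← h]
  simp

lemma des_le {n : ℕ} (σ : Equiv.Perm (Fin (n + 1))) : des σ ≤ n := by
  have := ascBefore_last_add_des σ
  omega

/-- The generating function `∑ (k+1)^(n+1) x^k = A_n(x) / (1-x)^(n+2)` on `|x| < 1`. -/
lemma hasSum_eulerian (n : ℕ) {x : ℝ} (hx : ‖x‖ < 1) :
    HasSum (fun k : ℕ => ((k : ℝ) + 1) ^ (n + 1) * x ^ k)
      ((eulerianPoly n).eval x / (1 - x) ^ (n + 2)) := by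
  have key : ∀ σ : Equiv.Perm (Fin (n + 1)),
      HasSum (fun k : ℕ => ((k + 1 + (n - des σ)).choose (n + 1) : ℝ) * x ^ k)
        (x ^ des σ * (1 / (1 - x) ^ (n + 2))) := by
    intro σ
    have hd := des_le σ
    have h0 := (hasSum_choose_mul_geometric_of_norm_lt_one (n + 1) hx).mul_left (x ^ des σ)
    refine (hasSum_nat_add_iff' (des σ)).1 ?_
    rw [Finset.sum_eq_zero, sub_zero]
    · refine (congrArg (fun f => HasSum f _) (funext fun j => ?_)).mp h0
      rw [show j + des σ + 1 + (n - des σ) = j + (n + 1) by omega, pow_add]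
      ring
    · intro i hi
      rw [Finset.mem_range] at hi
      rw [Nat.choose_eq_zero_of_lt (by omega)]
      simp
  have hs := hasSum_sum (s := (Finset.univ : Finset (Equiv.Perm (Fin (n + 1)))))
    fun σ _ => key σ
  convert hs using 1
  · funext k
    rw [← Finset.sum_mul]
    have := congrArg (Nat.cast (R := ℝ)) (worpitzky n k)
    push_cast at this
    rw [this]
  · rw [← Finset.sum_mul, eulerianPoly, Polynomial.eval_finsetSum]
    simp [div_eq_mul_inv]

/-! ### Test points for the largest root -/

/-- Truncating the alternating series at an even index `2K` gives an upper bound, provided the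
terms decrease from index `2K` on. -/
lemma eulerian_eval_nonpos (n K : ℕ) {x : ℝ} (hx0 : 0 < x) (hx1 : x < 1)
    (hratio : ((2 * K + 2 : ℝ) / (2 * K + 1)) ^ (n + 1) * x ≤ 1)
    (hsum : ∑ k ∈ Finset.range (2 * K + 1), ((k : ℝ) + 1) ^ (n + 1) * (-x) ^ k ≤ 0) :
    (eulerianPoly n).eval (-x) ≤ 0 := by
  have hs := hasSum_eulerian n (x := -x) (by rwa [norm_neg, Real.norm_of_nonneg hx0.le])
  have ht := ((hasSum_nat_add_iff' (2 * K + 1)).2 hs).tendsto_sum_nat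
  set l := (eulerianPoly n).eval (-x) / (1 - -x) ^ (n + 2) with hl
  set a : ℕ → ℝ := fun j => ((j : ℝ) + (2 * K + 2)) ^ (n + 1) * x ^ (j + (2 * K + 1)) with ha
  have hanti : Antitone a := by
    refine antitone_nat_of_succ_le fun j => ?_
    have hK : (0 : ℝ) ≤ K := Nat.cast_nonneg K
    have hj : (0 : ℝ) ≤ j := Nat.cast_nonneg j
    have h1 : ((j : ℝ) + 1 + (2 * K + 2)) ≤
        ((2 * K + 2 : ℝ) / (2 * K + 1)) * ((j : ℝ) + (2 * K + 2)) := by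
      rw [div_mul_eq_mul_div, le_div_iff₀ (by positivity)]
      nlinarith
    have h2 : ((j : ℝ) + 1 + (2 * K + 2)) ^ (n + 1) * x ≤ ((j : ℝ) + (2 * K + 2)) ^ (n + 1) := by
      calc ((j : ℝ) + 1 + (2 * K + 2)) ^ (n + 1) * x
          ≤ (((2 * K + 2 : ℝ) / (2 * K + 1)) * ((j : ℝ) + (2 * K + 2))) ^ (n + 1) * x := by
            gcongr
        _ = (((2 * K + 2 : ℝ) / (2 * K + 1)) ^ (n + 1) * x) * ((j : ℝ) + (2 * K + 2)) ^ (n + 1) := by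
            rw [mul_pow]; ring
        _ ≤ 1 * ((j : ℝ) + (2 * K + 2)) ^ (n + 1) := by gcongr
        _ = _ := one_mul _
    simp only [ha]
    push_cast
    calc ((j : ℝ) + 1 + (2 * K + 2)) ^ (n + 1) * x ^ (j + 1 + (2 * K + 1))
        = (((j : ℝ) + 1 + (2 * K + 2)) ^ (n + 1) * x) * x ^ (j + (2 * K + 1)) := by ring
      _ ≤ _ := by gcongr
  have ht' : Filter.Tendsto (fun N => ∑ i ∈ Finset.range N, (-1 : ℝ) ^ i * a i) Filter.atTop
      (nhds (-(l - ∑ k ∈ Finset.range (2 * K + 1), ((k : ℝ) + 1) ^ (n + 1) * (-x) ^ k))) := by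
    refine ht.neg.congr fun N => ?_
    rw [← Finset.sum_neg_distrib]
    refine Finset.sum_congr rfl fun i _ => ?_
    simp only [ha]
    push_cast
    rw [neg_pow x, pow_add (-1 : ℝ), pow_succ (-1 : ℝ) (2 * K), pow_mul]
    ring
  have h0 := hanti.alternating_series_le_tendsto ht' 0
  simp only [mul_zero, Finset.range_zero, Finset.sum_empty] at h0
  have hlneg : l ≤ 0 := by linarith
  have hpos : (0 : ℝ) < (1 - -x) ^ (n + 2) := pow_pos (by linarith) _
  rw [hl, div_le_iff₀ hpos, zero_mul] at hlneg
  exact hlneg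

lemma D1_eq (n : ℕ) (y : ℝ) : D1 n y =
    n * y ^ 2 + 2 * (4 - 2 ^ (n + 1) + n) * y
      + ((2 ^ (n + 1)) ^ 2 - 2 * 2 ^ (n + 1) - 2 * 3 ^ (n + 1) + 10 + n) := by
  unfold D1
  ring

lemma N1_eq (n : ℕ) (y : ℝ) : N1 n y =
    (2 ^ (n + 1) - 2) * y ^ 2
      + (-8 + 2 * 2 ^ (n + 1) - 2 * (2 ^ (n + 1)) ^ 2 + 4 * 3 ^ (n + 1) - 2 * n) * y
      + ((2 ^ (n + 1)) ^ 3 - 3 * 2 ^ (n + 1) * 3 ^ (n + 1) + (2 ^ (n + 1)) ^ 2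
        + 4 * 2 ^ (n + 1) + 8 / 3 * 3 ^ (n + 1) - 10 - n) := by
  have h4 : (4 : ℝ) ^ n = 2 ^ n * 2 ^ n := by rw [← mul_pow]; norm_num
  have h6 : (6 : ℝ) ^ n = 2 ^ n * 3 ^ n := by rw [← mul_pow]; norm_num
  have h8 : (8 : ℝ) ^ n = 2 ^ n * 2 ^ n * 2 ^ n := by rw [← mul_pow, ← mul_pow]; norm_num
  have h22 : (2 : ℝ) ^ (2 * n) = 2 ^ n * 2 ^ n := by rw [two_mul, pow_add]
  have h23 : (2 : ℝ) ^ (3 * n) = 2 ^ n * 2 ^ n * 2 ^ n := by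
    rw [← pow_add, ← pow_add]; congr 1; ring
  unfold N1
  simp only [pow_add, h4, h6, h8, h22, h23]
  ring

/-- The coefficient of `y ^ 2` in `e * D1 n y - N1 n y`, with `u = 2 ^ (n+1)`. -/
noncomputable def coeffTwo (ν u e : ℝ) : ℝ := e * ν - u + 2

/-- The coefficient of `y` in `e * D1 n y - N1 n y`, with `u = 2 ^ (n+1)`, `w = 3 ^ (n+1)`. -/
noncomputable def coeffOne (ν u w e : ℝ) : ℝ :=
  e * (2 * (4 - u + ν)) + 8 - 2 * u + 2 * u ^ 2 - 4 * w + 2 * ν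

/-- The constant coefficient of `e * D1 n y - N1 n y`, with `u = 2 ^ (n+1)`, `w = 3 ^ (n+1)`. -/
noncomputable def coeffZero (ν u w e : ℝ) : ℝ :=
  e * (u ^ 2 - 2 * u - 2 * w + 10 + ν)
    - (u ^ 3 - 3 * u * w + u ^ 2 + 4 * u + 8 / 3 * w - 10 - ν)

/-- If `A_n(-1/e) ≤ 0`, then `A_n` has a root in `[-1/e, 0]`, so `q ≥ -1/e`; and if the quadratic
`e * D1 n y - N1 n y` in `y` has nonpositive discriminant, this is enough for the bound. -/
lemma bound_of_test_point (n : ℕ) (y : ℝ) (hN : 0 < N1 n y) (q : ℝ)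
    (hmax : ∀ r : ℝ, (eulerianPoly n).eval r = 0 → r ≤ q) (e : ℝ) (he : 0 < e)
    (hneg : (eulerianPoly n).eval (-(1 / e)) ≤ 0)
    (h2 : 0 < coeffTwo n (2 ^ (n + 1)) e)
    (hdisc : coeffOne n (2 ^ (n + 1)) (3 ^ (n + 1)) e ^ 2
      ≤ 4 * coeffZero n (2 ^ (n + 1)) (3 ^ (n + 1)) e * coeffTwo n (2 ^ (n + 1)) e) :
    -(D1 n y / N1 n y) ≤ q := by
  have hzero : 0 ≤ (eulerianPoly n).eval 0 := by
    rw [eulerianPoly, Polynomial.eval_finsetSum]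
    refine Finset.sum_nonneg fun σ _ => ?_
    simp only [Polynomial.eval_pow, Polynomial.eval_X]
    positivity
  have hle : -(1 / e) ≤ (0 : ℝ) := by
    have : 0 < 1 / e := by positivity
    linarith
  obtain ⟨r, hr, hr0⟩ := intermediate_value_Icc hle
    (eulerianPoly n).continuous.continuousOn ⟨hneg, hzero⟩
  have hq : -(1 / e) ≤ q := hr.1.trans (hmax r hr0)
  refine le_trans ?_ hq
  rw [neg_le_neg_iff, div_le_div_iff₀ he hN, one_mul]
  have hQ : D1 n y * e - N1 n y = coeffTwo n (2 ^ (n + 1)) e * y ^ 2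
      + coeffOne n (2 ^ (n + 1)) (3 ^ (n + 1)) e * y
      + coeffZero n (2 ^ (n + 1)) (3 ^ (n + 1)) e := by
    rw [D1_eq, N1_eq]
    unfold coeffTwo coeffOne coeffZero
    ring
  set a := coeffTwo n (2 ^ (n + 1)) e
  set b := coeffOne n (2 ^ (n + 1)) (3 ^ (n + 1)) e
  set c := coeffZero n (2 ^ (n + 1)) (3 ^ (n + 1)) e
  -- Completing the square: `4a(ay² + by + c) = (2ay + b)² + (4ac - b²)`.
  have hsq : 0 ≤ 4 * a * (a * y ^ 2 + b * y + c) := by nlinarith [sq_nonneg (2 * a * y + b)]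
  have := nonneg_of_mul_nonneg_right hsq (by positivity)
  linarith

/-! ### The cases `n ≤ 23` -/

/-- The cases `2 ≤ n ≤ 23`, by rational test points `-1/e`. For `n ≥ 4` the value of `e` is a
truncation of the expansion of `-1/q` in powers of `w / u ^ 2` and `1 / u`, where `u = 2 ^ (n+1)` and
`w = 3 ^ (n+1)`. -/
lemma bound_small (n : ℕ) (hn : 2 ≤ n) (hn' : n ≤ 23) (y : ℝ) (hN : 0 < N1 n y) (q : ℝ)
    (hmax : ∀ r : ℝ, (eulerianPoly n).eval r = 0 → r ≤ q) :
    -(D1 n y / N1 n y) ≤ q := by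
  rcases (show n = 2 ∨ n = 3 ∨ 4 ≤ n by omega) with rfl | rfl | h4
  · refine bound_of_test_point 2 y hN q hmax (73 / 20) (by norm_num)
      (eulerian_eval_nonpos 2 4 (by norm_num) (by norm_num) (by norm_num)
        (by norm_num [Finset.sum_range_succ])) ?_ ?_ <;>
    norm_num [coeffTwo, coeffOne, coeffZero]
  · refine bound_of_test_point 3 y hN q hmax (49 / 5) (by norm_num)
      (eulerian_eval_nonpos 3 3 (by norm_num) (by norm_num) (by norm_num)
        (by norm_num [Finset.sum_range_succ])) ?_ ?_ <;>
    norm_num [coeffTwo, coeffOne, coeffZero]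
  · refine bound_of_test_point n y hN q hmax (2 ^ (n + 1) - 3 ^ (n + 1) / 2 ^ (n + 1)
      - (3 ^ (n + 1)) ^ 2 / (2 ^ (n + 1)) ^ 3 + 1 / 2) ?_
      (eulerian_eval_nonpos n 2 ?_ ?_ ?_ ?_) ?_ ?_
    all_goals clear hN hmax
    all_goals interval_cases n <;>
      norm_num [Finset.sum_range_succ, coeffTwo, coeffOne, coeffZero]

/-! ### The cases `n ≥ 24` -/

/-- Propagates `C ≤ a ^ 25` to larger exponents. -/
lemma le_pow_of_le_pow {a C : ℝ} (ha : 1 ≤ a) (h : C ≤ a ^ 25) {m : ℕ} (hm : 25 ≤ m) :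
    C ≤ a ^ m := h.trans (pow_le_pow_right₀ ha hm)

/-- The discriminant estimate when `u = e + s` and `w = e * s`: the leading terms of the three
coefficients are then `(ν - 1) e`, `-2 s e` and `s ^ 2 e`. -/
lemma disc_large {ν e s : ℝ} (hν : 24 ≤ ν) (hs : 100 * ν ≤ s) (hse : 100 * s ≤ e)
    (hss : 16 * e ≤ s ^ 2) :
    0 < coeffTwo ν (e + s) e ∧
      coeffOne ν (e + s) (e * s) e ^ 2
        ≤ 4 * coeffZero ν (e + s) (e * s) e * coeffTwo ν (e + s) e := by
  have hs0 : 0 < s := by linarith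
  have he0 : 0 < e := by linarith
  have h2 : 2 * e ≤ coeffTwo ν (e + s) e := by
    unfold coeffTwo
    nlinarith
  have h1u : coeffOne ν (e + s) (e * s) e ≤ 2 * s * e := by
    have : coeffOne ν (e + s) (e * s) e
        = -2 * s * (e - s) + (6 + 2 * ν) * e - 2 * s + 8 + 2 * ν := by
      unfold coeffOne; ring
    rw [this]
    nlinarith [mul_pos hs0 he0]
  have h1l : -(2 * s * e) ≤ coeffOne ν (e + s) (e * s) e := by
    have : coeffOne ν (e + s) (e * s) e
        = -2 * s * (e - s) + (6 + 2 * ν) * e - 2 * s + 8 + 2 * ν := by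
      unfold coeffOne; ring
    rw [this]
    nlinarith [mul_pos hs0 hs0]
  have h0 : 1 / 2 * (s ^ 2 * e) ≤ coeffZero ν (e + s) (e * s) e := by
    have : coeffZero ν (e + s) (e * s) e
        = s ^ 2 * (e - s) - 3 * e ^ 2 - 20 / 3 * (e * s) - s ^ 2 + (6 + ν) * e - 4 * s
          + 10 + ν := by
      unfold coeffZero; ring
    rw [this]
    have a1 : 16 * e * e ≤ s ^ 2 * e := by gcongr
    have a2 : 100 * (s ^ 2 * s) ≤ s ^ 2 * e := by nlinarith [sq_nonneg s]
    have a3 : 100 * (e * s) ≤ e * e := by nlinarith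
    have a4 : 100 * s ^ 2 ≤ e * s := by nlinarith
    nlinarith [mul_pos he0 hs0, mul_pos he0 he0]
  refine ⟨by linarith, ?_⟩
  have hp : 0 < s ^ 2 * e := by positivity
  calc coeffOne ν (e + s) (e * s) e ^ 2 ≤ (2 * s * e) ^ 2 := sq_le_sq' h1l h1u
    _ = 4 * (1 / 2 * (s ^ 2 * e)) * (2 * e) := by ring
    _ ≤ _ := by gcongr; linarith

/-- The cases `n ≥ 24`. Here `e` is the larger root of `e ^ 2 - u e + w`, where `u = 2 ^ (n+1)` and
`w = 3 ^ (n+1)`, so that `-1/e` is a root of the truncation `1 + u x + w x ^ 2` of the generating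
series. -/
lemma bound_large (n : ℕ) (hn : 24 ≤ n) (y : ℝ) (hN : 0 < N1 n y) (q : ℝ)
    (hmax : ∀ r : ℝ, (eulerianPoly n).eval r = 0 → r ≤ q) :
    -(D1 n y / N1 n y) ≤ q := by
  have hm : 25 ≤ n + 1 := by omega
  obtain ⟨u, hu⟩ : ∃ u : ℝ, u = 2 ^ (n + 1) := ⟨_, rfl⟩
  obtain ⟨w, hw⟩ : ∃ w : ℝ, w = 3 ^ (n + 1) := ⟨_, rfl⟩
  have hu0 : 0 < u := by rw [hu]; positivity
  have hw0 : 0 < w := by rw [hw]; positivity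
  -- Each estimate says that a power `a ^ (n+1)`, with `a = 4/3`, `9/8`, `3/2` or `2`, is large.
  have b1 : 400 * w ≤ u ^ 2 := by
    have h := le_pow_of_le_pow (a := 4 / 3) (C := 400) (by norm_num) (by norm_num) hm
    rw [div_pow, le_div_iff₀ (by positivity)] at h
    rw [hu, hw, ← pow_mul, mul_comm (n + 1) 2, pow_mul]
    norm_num
    exact h
  have b2 : 16 * u ^ 3 ≤ w ^ 2 := by
    have h := le_pow_of_le_pow (a := 9 / 8) (C := 16) (by norm_num) (by norm_num) hm
    rw [div_pow, le_div_iff₀ (by positivity)] at h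
    rw [hu, hw, ← pow_mul, ← pow_mul, mul_comm (n + 1) 2, mul_comm (n + 1) 3, pow_mul, pow_mul]
    norm_num
    exact h
  have b3 : 100 * (n : ℝ) * u ≤ w := by
    have h : ∀ k : ℕ, 24 ≤ k → 100 * (k : ℝ) ≤ (3 / 2) ^ (k + 1) := by
      intro k hk
      induction k, hk using Nat.le_induction with
      | base => norm_num
      | succ k hk ih =>
        have : (24 : ℝ) ≤ k := by exact_mod_cast hk
        rw [pow_succ]
        push_cast
        nlinarith
    have h' := h n hn
    rw [div_pow, le_div_iff₀ (by positivity)] at h'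
    rw [hu, hw]
    exact h'
  have b4 : 2 * (4 / 3 : ℝ) ^ (n + 1) ≤ u := by
    have h := le_pow_of_le_pow (a := 3 / 2) (C := 2) (by norm_num) (by norm_num) hm
    calc 2 * (4 / 3 : ℝ) ^ (n + 1) ≤ (3 / 2) ^ (n + 1) * (4 / 3 : ℝ) ^ (n + 1) := by gcongr
      _ = u := by rw [hu, ← mul_pow]; norm_num
  have b5 : 4 ≤ u := by
    rw [hu]
    exact le_pow_of_le_pow (by norm_num) (by norm_num) hm
  obtain ⟨d, hd⟩ : ∃ d : ℝ, d = Real.sqrt (u ^ 2 - 4 * w) := ⟨_, rfl⟩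
  have hd0 : 0 ≤ d := hd ▸ Real.sqrt_nonneg _
  have hd2 : d ^ 2 = u ^ 2 - 4 * w := by rw [hd, Real.sq_sqrt (by linarith)]
  obtain ⟨e, he⟩ : ∃ e : ℝ, e = (u + d) / 2 := ⟨_, rfl⟩
  obtain ⟨s, hs⟩ : ∃ s : ℝ, s = (u - d) / 2 := ⟨_, rfl⟩
  have hes : e + s = u := by rw [he, hs]; ring
  have hprod : e * s = w := by rw [he, hs]; nlinarith
  have hue : u ≤ 2 * e := by linarith
  have he0 : 0 < e := by linarith
  have hs0 : 0 < s := by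
    by_contra hcon
    nlinarith
  have heu : e ≤ u := by linarith
  -- `s = w / e ≥ w / u`
  have hsw : w ≤ s * u := by nlinarith
  have c1 : 100 * (n : ℝ) ≤ s := le_of_mul_le_mul_right (b3.trans hsw) hu0
  have c2 : 100 * s ≤ e := by
    refine le_of_mul_le_mul_left ?_ he0
    nlinarith
  have c3 : 16 * e ≤ s ^ 2 := by
    have h : 16 * u * u ^ 2 ≤ s ^ 2 * u ^ 2 := by
      have : w ^ 2 ≤ (s * u) ^ 2 := by gcongr
      nlinarith
    have := le_of_mul_le_mul_right h (by positivity)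
    linarith
  have hν : (24 : ℝ) ≤ n := by exact_mod_cast hn
  obtain ⟨k2, kd⟩ := disc_large hν c1 c2 c3
  rw [hes, hu] at k2
  rw [hes, hprod, hu, hw] at kd
  refine bound_of_test_point n y hN q hmax e he0 ?_ k2 kd
  have hx1 : 1 / e < 1 := by
    rw [div_lt_one he0]
    linarith
  refine eulerian_eval_nonpos n 1 (by positivity) hx1 ?_ ?_
  · rw [mul_one_div, div_le_one he0]
    norm_num
    linarith
  · have : ∑ k ∈ Finset.range (2 * 1 + 1), ((k : ℝ) + 1) ^ (n + 1) * (-(1 / e)) ^ k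
        = (e ^ 2 - u * e + w) / e ^ 2 := by
      rw [hu, hw]
      norm_num [Finset.sum_range_succ]
      field_simp
      ring
    rw [this, ← hes, ← hprod]
    apply le_of_eq
    rw [div_eq_zero_iff]
    left
    ring

/-- for every `n ≥ 2` and every `y ∈ ℝ` with `N₁(n,y) > 0`, the largest real
root `q` of the Eulerian polynomial `A_n` satisfies `q ≥ −D₁(n,y)/N₁(n,y)`. -/
theorem stmt19 (n : ℕ) (hn : 2 ≤ n) (y : ℝ) (hN : 0 < N1 n y)
    (q : ℝ) (hq : (eulerianPoly n).eval q = 0)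
    (hmax : ∀ r : ℝ, (eulerianPoly n).eval r = 0 → r ≤ q) :
    -(D1 n y / N1 n y) ≤ q := by
  rcases Nat.lt_or_ge n 24 with h | h
  · exact bound_small n hn (by omega) y hN q hmax
  · exact bound_large n h y hN q hmax
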